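/- arXiv:1910.09443 — 4 statements merged into one kernel-verified Lean document; each statement's English description precedes it below -/
import Mathlib

section
/- Suppose {(u^d_k, y^d_k)}_{k=0}^{N-1} is a trajectory of the minimal LTI system (A,B,C,D) (i.e. (A,B) is controllable and (A,C) is observable), and u^d is persistently exciting of order L+n. Then a sequence {(ū_k, ȳ_k)}_{k=0}^{L-1} is a trajectory of (A,B,C,D) if and only if there exists α ∈ ℝ^{N-L+1} such that H_L(u^d) α equals the stacked vector ū_{[0,L-1]} and H_L(y^d) α equals the stacked vector ȳ_{[0,L-1]}. -/
/-!
Every window of length `L` of the data is a trajectory, so by linearity is every combination of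
windows. Conversely, a trajectory of length `L` is determined by its input and its initial state, so
it suffices that weights `α` exist matching an arbitrary pair (initial state, input), i.e. that the
matrix stacking the states `x_0, …, x_{N-L}` over the input Hankel matrix of depth `L` has full row
rank (`exists_weights`).

Let `(ξ, η)` be in its left kernel (`annihilator_eq_zero`). Shift the relation
`ξ·x_j + ∑ η_i·u_{j+i} = 0` by `s ≤ n` steps and express `x_{j+s}` through `x_j` and the inputs.
The coefficients of the inputs are then the sequence
`θ = (ξ A^{n-1} B, …, ξ A B, ξ B, η_0, …, η_{L-1}, 0, 0, …)` read from the offset `n - s`. Combining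
the shifts with the coefficients of the characteristic polynomial of `A` eliminates the state by
Cayley-Hamilton and leaves a left annihilator of the input Hankel matrix of depth `L + n`, which
vanishes by persistency of excitation. As the polynomial is monic, this is a linear recursion
computing `θ` backwards from its zero tail. Hence `θ = 0`, so `η = 0`, and `ξ A^k B = 0` for `k < n`
gives `ξ = 0` by controllability.
-/


/-- Squared Euclidean norm of a vector in `ℝ^d`. -/
noncomputable def sqnorm {d : ℕ} (v : Fin d → ℝ) : ℝ := ∑ i, (v i) ^ 2

/-- `{(u_k, y_k)}_{k=0}^{N-1}` is a trajectory of the LTI system `(A,B,C,D)`: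
there is a state sequence `x` with `x_{k+1} = A x_k + B u_k` and `y_k = C x_k + D u_k`
for all `k ∈ {0, ..., N-1}`. -/
def IsTraj {n m p : ℕ} (A : Matrix (Fin n) (Fin n) ℝ) (B : Matrix (Fin n) (Fin m) ℝ)
    (C : Matrix (Fin p) (Fin n) ℝ) (D : Matrix (Fin p) (Fin m) ℝ)
    (N : ℕ) (u : ℕ → Fin m → ℝ) (y : ℕ → Fin p → ℝ) : Prop :=
  ∃ x : ℕ → Fin n → ℝ, ∀ k < N,
    x (k + 1) = A.mulVec (x k) + B.mulVec (u k) ∧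
    y k = C.mulVec (x k) + D.mulVec (u k)

/-- The Hankel matrix of depth `L` with `cols` columns built from the signal `u`;
its `(i,a),(j)` entry is the `a`-th component of `u_{i+j}`. -/
def Hankel {m : ℕ} (L cols : ℕ) (u : ℕ → Fin m → ℝ) :
    Matrix (Fin L × Fin m) (Fin cols) ℝ :=
  Matrix.of fun ia j => u (ia.1.1 + j.1) ia.2

/-- `(A,B)` is controllable: the controllability matrix `[B, AB, ..., A^{n-1}B]` has rank `n`. -/
noncomputable def Controllable {n m : ℕ} (A : Matrix (Fin n) (Fin n) ℝ)
    (B : Matrix (Fin n) (Fin m) ℝ) : Prop :=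
  (Matrix.of fun (i : Fin n) (kj : Fin n × Fin m) => (A ^ (kj.1 : ℕ) * B) i kj.2).rank = n

/-- `(A,C)` is observable: the observability matrix `[C; CA; ...; CA^{n-1}]` has rank `n`. -/
noncomputable def Observable {n p : ℕ} (A : Matrix (Fin n) (Fin n) ℝ)
    (C : Matrix (Fin p) (Fin n) ℝ) : Prop :=
  (Matrix.of fun (ki : Fin n × Fin p) (j : Fin n) => (C * A ^ (ki.1 : ℕ)) ki.2 j).rank = n

/-- `(u^s, y^s)` is an (input-output) equilibrium of `(A,B,C,D)`: the constant
sequence of length `n+1` is a trajectory of the system. -/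
def IsEquil {n m p : ℕ} (A : Matrix (Fin n) (Fin n) ℝ) (B : Matrix (Fin n) (Fin m) ℝ)
    (C : Matrix (Fin p) (Fin n) ℝ) (D : Matrix (Fin p) (Fin m) ℝ)
    (us : Fin m → ℝ) (ys : Fin p → ℝ) : Prop :=
  IsTraj A B C D (n + 1) (fun _ => us) (fun _ => ys)

open Matrix in
lemma vecMul_eq_zero_of_rank {ι κ : Type*} [Fintype ι] [Fintype κ]
    (M : Matrix ι κ ℝ) (h : M.rank = Fintype.card ι) (v : ι → ℝ) (hv : v ᵥ* M = 0) : v = 0 := by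
  have hli : LinearIndependent ℝ M.row := by
    rw [linearIndependent_iff_card_eq_finrank_span, ← h, rank_eq_finrank_span_row]
    rfl
  exact Matrix.vecMul_injective_iff.2 hli (hv.trans (zero_vecMul M).symm)

open Matrix in
lemma mulVec_surjective_of_vecMul {ι κ : Type*} [Fintype ι] [Fintype κ]
    (M : Matrix ι κ ℝ) (h : ∀ v : ι → ℝ, v ᵥ* M = 0 → v = 0) (w : ι → ℝ) :
    ∃ a, M *ᵥ a = w := by
  have hli : LinearIndependent ℝ M.row := by
    rw [← Matrix.vecMul_injective_iff]
    exact (injective_iff_map_eq_zero M.vecMulLinear).2 h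
  have hr := hli.rank_matrix
  have : LinearMap.range M.mulVecLin = ⊤ := by
    apply Submodule.eq_top_of_finrank_eq
    rw [Module.finrank_pi]; exact hr
  exact LinearMap.range_eq_top.1 this w

open Matrix in
/-- Variation of constants: the state after `s` further steps, started at time `j`. -/
lemma state_formula {n m N : ℕ} {A : Matrix (Fin n) (Fin n) ℝ} {B : Matrix (Fin n) (Fin m) ℝ}
    {u : ℕ → Fin m → ℝ} {x : ℕ → Fin n → ℝ}
    (hx : ∀ k < N, x (k + 1) = A *ᵥ x k + B *ᵥ u k) (j s : ℕ) (hjs : j + s ≤ N) :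
    x (j + s) = A ^ s *ᵥ x j + ∑ t ∈ Finset.range s, (A ^ (s - 1 - t) * B) *ᵥ u (j + t) := by
  induction s with
  | zero => simp
  | succ s ih =>
    rw [← add_assoc, hx _ (by omega), ih (by omega), Finset.sum_range_succ, mulVec_add,
      mulVec_mulVec, ← pow_succ', Matrix.mulVec_sum, add_assoc]
    congr 2
    · refine Finset.sum_congr rfl fun t ht => ?_
      have := Finset.mem_range.1 ht
      rw [mulVec_mulVec, ← Matrix.mul_assoc, ← pow_succ']
      congr 4; omega
    · simp

open Matrix in
/-- The states over the input Hankel matrix of depth `L` have trivial left kernel; the input part of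
a kernel element is encoded as a sequence `η` vanishing from index `L` on. -/
lemma annihilator_eq_zero {n m N L : ℕ}
    (A : Matrix (Fin n) (Fin n) ℝ) (B : Matrix (Fin n) (Fin m) ℝ)
    (hctrb : Controllable A B) (u : ℕ → Fin m → ℝ) (x : ℕ → Fin n → ℝ) (hN : L + n ≤ N)
    (hx : ∀ k < N, x (k + 1) = A *ᵥ x k + B *ᵥ u k)
    (hPE : (Hankel (L + n) (N - (L + n) + 1) u).rank = m * (L + n))
    (ξ : Fin n → ℝ) (η : ℕ → Fin m → ℝ) (hη : ∀ i, L ≤ i → η i = 0)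
    (h : ∀ j ≤ N - L, ξ ⬝ᵥ x j + ∑ i ∈ Finset.range L, η i ⬝ᵥ u (j + i) = 0) :
    ξ = 0 ∧ ∀ i, η i = 0 := by
  obtain ⟨θ, hθ⟩ : ∃ θ : ℕ → Fin m → ℝ,
    θ = fun r => if r < n then ξ ᵥ* (A ^ (n - 1 - r) * B) else η (r - n) := ⟨_, rfl⟩
  -- the relation shifted by `s` steps, written with the state at time `j`
  have hrel : ∀ s ≤ n, ∀ j, j + (L + n) ≤ N →
      (ξ ᵥ* A ^ s) ⬝ᵥ x j +
        ∑ t ∈ Finset.range (L + n), θ (t + n - s) ⬝ᵥ u (j + t) = 0 := by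
    intro s hs j hj
    have h1 := h (j + s) (by omega)
    rw [state_formula hx j s (by omega), dotProduct_add, dotProduct_mulVec, dotProduct_sum,
      add_assoc] at h1
    rw [← h1]
    congr 1
    rw [show L + n = s + (L + (n - s)) by omega, Finset.sum_range_add, Finset.sum_range_add]
    congr 1
    · refine Finset.sum_congr rfl fun t ht => ?_
      have := Finset.mem_range.1 ht
      rw [hθ, dotProduct_mulVec]
      simp only
      rw [if_pos (by omega), show n - 1 - (t + n - s) = s - 1 - t by omega]
    · rw [Finset.sum_eq_zero (s := Finset.range (n - s)), add_zero]
      · refine Finset.sum_congr rfl fun t ht => ?_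
        rw [hθ]
        simp only
        rw [if_neg (by omega), show s + t + n - s - n = t by omega, add_assoc]
      · intro t ht
        rw [hθ]
        simp only
        rw [if_neg (by omega), hη _ (by omega), zero_dotProduct]
  obtain ⟨c, hc⟩ : ∃ c : ℕ → ℝ, c = A.charpoly.coeff := ⟨_, rfl⟩
  have hcn : c n = 1 := by
    have h1 := A.charpoly_monic.coeff_natDegree
    rw [A.charpoly_natDegree_eq_dim, Fintype.card_fin] at h1
    rw [hc, h1]
  have hCH : ∑ s ∈ Finset.range (n + 1), c s • A ^ s = 0 := by
    have h1 := A.aeval_self_charpoly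
    rw [Polynomial.aeval_eq_sum_range, A.charpoly_natDegree_eq_dim, Fintype.card_fin] at h1
    rw [hc, h1]
  -- by Cayley-Hamilton, this combination of the shifted relations no longer involves the state
  have hcomb : ∀ j, j + (L + n) ≤ N → ∑ t ∈ Finset.range (L + n),
      (∑ s ∈ Finset.range (n + 1), c s • θ (t + n - s)) ⬝ᵥ u (j + t) = 0 := by
    intro j hj
    have h1 : ∑ s ∈ Finset.range (n + 1), c s * ((ξ ᵥ* A ^ s) ⬝ᵥ x j +
        ∑ t ∈ Finset.range (L + n), θ (t + n - s) ⬝ᵥ u (j + t)) = 0 :=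
      Finset.sum_eq_zero fun s hs => by
        rw [hrel s (by have := Finset.mem_range.1 hs; omega) j hj, mul_zero]
    simp only [mul_add, Finset.sum_add_distrib] at h1
    have h2 : ∑ s ∈ Finset.range (n + 1), c s * ((ξ ᵥ* A ^ s) ⬝ᵥ x j) = 0 := by
      have : ξ ⬝ᵥ ((∑ s ∈ Finset.range (n + 1), c s • A ^ s) *ᵥ x j) = 0 := by
        rw [hCH, zero_mulVec, dotProduct_zero]
      rw [← this, Matrix.sum_mulVec, dotProduct_sum]
      refine Finset.sum_congr rfl fun s _ => ?_
      rw [smul_mulVec, dotProduct_smul, dotProduct_mulVec, smul_eq_mul]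
    rw [h2, zero_add] at h1
    rw [← h1]
    simp only [sum_dotProduct, smul_dotProduct, Finset.mul_sum, smul_eq_mul]
    exact Finset.sum_comm
  -- each coefficient vanishes, since the input Hankel matrix of depth `L + n` has full row rank
  have hw : ∀ r < L + n, ∑ s ∈ Finset.range (n + 1), c s • θ (r + n - s) = 0 := by
    have h0 := vecMul_eq_zero_of_rank _ (by rw [hPE]; simp [mul_comm])
      (fun ia : Fin (L + n) × Fin m =>
        (∑ s ∈ Finset.range (n + 1), c s • θ (ia.1.1 + n - s)) ia.2) (by
      ext j
      have h1 := hcomb j.1 (by have := j.2; omega)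
      rw [← Fin.sum_univ_eq_sum_range (fun t =>
        (∑ s ∈ Finset.range (n + 1), c s • θ (t + n - s)) ⬝ᵥ u (j + t))] at h1
      rw [Pi.zero_apply, ← h1]
      simp only [vecMul, dotProduct, Fintype.sum_prod_type, Hankel, Matrix.of_apply,
        add_comm j.1])
    intro r hr
    ext a
    exact congrFun h0 (⟨r, hr⟩, a)
  -- `hw` expresses `θ r` through later terms because `c n = 1`, and `θ` vanishes from `L + n` on;
  -- the induction is on the distance `e` to that tail
  have hz : ∀ e r, L + n ≤ r + e → θ r = 0 := by
    intro e
    induction e using Nat.strong_induction_on with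
    | _ e ih =>
      intro r hr
      by_cases hrL : L + n ≤ r
      · rw [hθ]
        simp only
        rw [if_neg (by omega), hη _ (by omega)]
      · have h1 := hw r (by omega)
        rw [Finset.sum_range_succ, hcn, one_smul, Nat.add_sub_cancel, Finset.sum_eq_zero,
          zero_add] at h1
        · exact h1
        · intro s hs
          have := Finset.mem_range.1 hs
          rw [ih (e - 1) (by omega) (r + n - s) (by omega), smul_zero]
  constructor
  · refine vecMul_eq_zero_of_rank _ (hctrb.trans (by simp)) ξ ?_
    ext ⟨k, a⟩
    have h1 := hz (L + n) (n - 1 - k.1) (by omega)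
    have hk := k.2
    rw [hθ] at h1
    simp only at h1
    rw [if_pos (by omega), show n - 1 - (n - 1 - k.1) = k.1 by omega] at h1
    exact congrFun h1 a
  · intro i
    have h1 := hz (L + n) (i + n) (by omega)
    rw [hθ] at h1
    simpa using h1

open Matrix in
/-- Some combination of the data windows has any prescribed initial state and input. -/
lemma exists_weights {n m N L : ℕ}
    (A : Matrix (Fin n) (Fin n) ℝ) (B : Matrix (Fin n) (Fin m) ℝ)
    (hctrb : Controllable A B) (u : ℕ → Fin m → ℝ) (x : ℕ → Fin n → ℝ) (hN : L + n ≤ N)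
    (hx : ∀ k < N, x (k + 1) = A *ᵥ x k + B *ᵥ u k)
    (hPE : (Hankel (L + n) (N - (L + n) + 1) u).rank = m * (L + n))
    (x₀ : Fin n → ℝ) (ubar : ℕ → Fin m → ℝ) :
    ∃ α : Fin (N - L + 1) → ℝ, ∑ j, α j • x j = x₀ ∧
      ∀ i < L, ∑ j, α j • u (i + j) = ubar i := by
  obtain ⟨α, hα⟩ := mulVec_surjective_of_vecMul
    (Matrix.fromRows (Matrix.of fun (i : Fin n) (j : Fin (N - L + 1)) => x j.1 i) (Hankel L (N - L + 1) u)) (by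
      intro v hv
      obtain ⟨h1, h2⟩ := annihilator_eq_zero A B hctrb u x hN hx hPE (fun i => v (Sum.inl i))
        (fun i a => if hi : i < L then v (Sum.inr (⟨i, hi⟩, a)) else 0)
        (by intro i hi; ext a; simp [not_lt.2 hi])
        (by
          intro j hj
          have h3 := congrFun hv ⟨j, by omega⟩
          rw [← Fin.sum_univ_eq_sum_range (fun i => (fun a =>
            if hi : i < L then v (Sum.inr (⟨i, hi⟩, a)) else 0) ⬝ᵥ u (j + i))]
          rw [Pi.zero_apply] at h3
          rw [← h3]
          simp [vecMul, dotProduct, Fintype.sum_prod_type, Hankel, add_comm j])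
      ext (i | ⟨i, a⟩)
      · exact congrFun h1 i
      · simpa using congrFun (h2 i.1) a)
    (Sum.elim x₀ (fun ia => ubar ia.1.1 ia.2))
  refine ⟨α, ?_, ?_⟩
  · ext i
    have := congrFun hα (Sum.inl i)
    simpa [mulVec, dotProduct, mul_comm] using this
  · intro i hi
    ext a
    have := congrFun hα (Sum.inr (⟨i, hi⟩, a))
    simpa [mulVec, dotProduct, Hankel, mul_comm] using this

open Matrix in
lemma hankel_mulVec_eq_iff {q L cols : ℕ} (z zbar : ℕ → Fin q → ℝ) (α : Fin cols → ℝ) :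
    (Hankel L cols z).mulVec α = (fun ia => zbar ia.1.1 ia.2) ↔
      ∀ i < L, ∑ j, α j • z (i + j) = zbar i := by
  constructor
  · intro h i hi
    ext a
    have := congrFun h (⟨i, hi⟩, a)
    simpa [mulVec, dotProduct, Hankel, mul_comm] using this
  · intro h
    ext ⟨i, a⟩
    have := congrFun (h i.1 i.2) a
    simpa [mulVec, dotProduct, Hankel, mul_comm] using this

open Matrix in
lemma sum_smul_affine {a b c ι : Type*} [Fintype a] [Fintype b] [Fintype ι]
    (F : Matrix c a ℝ) (G : Matrix c b ℝ) (α : ι → ℝ) (x : ι → a → ℝ) (u : ι → b → ℝ) :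
    ∑ j, α j • (F *ᵥ x j + G *ᵥ u j) = F *ᵥ (∑ j, α j • x j) + G *ᵥ (∑ j, α j • u j) := by
  simp only [smul_add, Finset.sum_add_distrib, Matrix.mulVec_sum, mulVec_smul]

/-- **Fundamental Lemma (Willems et al.)**: if `u^d` is persistently exciting of order
`L + n` and `(u^d, y^d)` is a trajectory of the minimal system `(A,B,C,D)`, then
`(ubar, ybar)` of length `L` is a trajectory iff it is in the image of the Hankel matrices. -/
theorem statement0 {n m p N L : ℕ} (hn : 1 ≤ n) (hm : 1 ≤ m) (hp : 1 ≤ p) (hL : 1 ≤ L)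
    (A : Matrix (Fin n) (Fin n) ℝ) (B : Matrix (Fin n) (Fin m) ℝ)
    (C : Matrix (Fin p) (Fin n) ℝ) (D : Matrix (Fin p) (Fin m) ℝ)
    (hctrb : Controllable A B) (hobs : Observable A C)
    (ud : ℕ → Fin m → ℝ) (yd : ℕ → Fin p → ℝ)
    (hN : L + n ≤ N)
    (htraj : IsTraj A B C D N ud yd)
    (hPE : (Hankel (L + n) (N - (L + n) + 1) ud).rank = m * (L + n))
    (ubar : ℕ → Fin m → ℝ) (ybar : ℕ → Fin p → ℝ) :
    IsTraj A B C D L ubar ybar ↔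
      ∃ α : Fin (N - L + 1) → ℝ,
        (Hankel L (N - L + 1) ud).mulVec α = (fun ia => ubar ia.1.1 ia.2) ∧
        (Hankel L (N - L + 1) yd).mulVec α = (fun ia => ybar ia.1.1 ia.2) := by
  obtain ⟨x, hx⟩ := htraj
  have hxs : ∀ α : Fin (N - L + 1) → ℝ, ∀ k < L, ∑ j, α j • x (k + 1 + j) =
      A.mulVec (∑ j, α j • x (k + j)) + B.mulVec (∑ j, α j • ud (k + j)) := by
    intro α k hk
    rw [← sum_smul_affine]
    refine Finset.sum_congr rfl fun j _ => ?_
    rw [← (hx (k + j) (by have := j.2; omega)).1, add_right_comm]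
  have hys : ∀ α : Fin (N - L + 1) → ℝ, ∀ k < L, ∑ j, α j • yd (k + j) =
      C.mulVec (∑ j, α j • x (k + j)) + D.mulVec (∑ j, α j • ud (k + j)) := by
    intro α k hk
    rw [← sum_smul_affine]
    refine Finset.sum_congr rfl fun j _ => ?_
    rw [← (hx (k + j) (by have := j.2; omega)).2]
  simp only [hankel_mulVec_eq_iff]
  constructor
  · rintro ⟨xbar, hxbar⟩
    obtain ⟨α, hα0, hαu⟩ := exists_weights A B hctrb ud x hN (fun k hk => (hx k hk).1) hPE
      (xbar 0) ubar
    have hst : ∀ k ≤ L, ∑ j, α j • x (k + j) = xbar k := by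
      intro k
      induction k with
      | zero => intro _; simpa using hα0
      | succ k ih =>
        intro hk
        rw [hxs α k hk, ih (by omega), hαu k hk, ← (hxbar k hk).1]
    refine ⟨α, hαu, fun k hk => ?_⟩
    rw [hys α k hk, hst k hk.le, hαu k hk, ← (hxbar k hk).2]
  · rintro ⟨α, hαu, hαy⟩
    refine ⟨fun k => ∑ j, α j • x (k + j), fun k hk => ⟨?_, ?_⟩⟩
    · dsimp only
      rw [hxs α k hk, hαu k hk]
    · rw [← hαy k hk, hys α k hk, hαu k hk]
end

section
/- Suppose (A,C) is observable and {x_k}_{k=0}^{n+1} is a state sequence with x_{k+1} = A x_k + B u^s and C x_k + D u^s = y^s for all k ∈ {0,...,n} (i.e. the constant input u^s applied over n+1 steps produces the constant output y^s). Then the state is constant, x_k = x_0 for all k ∈ {0,...,n+1}, and x_0 satisfies (I − A) x_0 = B u^s and y^s = C x_0 + D u^s. -/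
/-- The unobservable subspace of an observable pair is trivial. -/
lemma Observable.eq_zero {n p : ℕ} {A : Matrix (Fin n) (Fin n) ℝ}
    {C : Matrix (Fin p) (Fin n) ℝ} (hobs : Observable A C) {w : Fin n → ℝ}
    (hw : ∀ k < n, C.mulVec ((A ^ k).mulVec w) = 0) : w = 0 := by
  unfold Observable at hobs
  set M : Matrix (Fin n × Fin p) (Fin n) ℝ :=
    Matrix.of fun (ki : Fin n × Fin p) (j : Fin n) => (C * A ^ (ki.1 : ℕ)) ki.2 j with hM
  have hker : LinearMap.ker M.mulVecLin = ⊥ := by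
    have h := LinearMap.finrank_range_add_finrank_ker M.mulVecLin
    rw [Module.finrank_fin_fun] at h
    have h' : Module.finrank ℝ (LinearMap.range M.mulVecLin) = n := hobs
    exact Submodule.finrank_eq_zero.mp (by omega)
  have hmem : w ∈ LinearMap.ker M.mulVecLin := by
    rw [LinearMap.mem_ker, Matrix.mulVecLin_apply]
    ext ⟨k, i⟩
    have h := congrFun (hw k k.2) i
    rw [Matrix.mulVec_mulVec] at h
    exact h
  rwa [hker, Submodule.mem_bot] at hmem

/-- If the constant input `u^s` applied over `n+1` steps produces the constant output
`y^s` and `(A,C)` is observable, then the state is constant and satisfies the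
equilibrium equations `(I - A) x_0 = B u^s` and `y^s = C x_0 + D u^s`. -/
theorem statement3 {n m p : ℕ} (hn : 1 ≤ n) (hm : 1 ≤ m) (hp : 1 ≤ p)
    (A : Matrix (Fin n) (Fin n) ℝ) (B : Matrix (Fin n) (Fin m) ℝ)
    (C : Matrix (Fin p) (Fin n) ℝ) (D : Matrix (Fin p) (Fin m) ℝ)
    (hobs : Observable A C)
    (x : ℕ → Fin n → ℝ) (us : Fin m → ℝ) (ys : Fin p → ℝ)
    (hdyn : ∀ k ≤ n, x (k + 1) = A.mulVec (x k) + B.mulVec us)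
    (hout : ∀ k ≤ n, C.mulVec (x k) + D.mulVec us = ys) :
    (∀ k ≤ n + 1, x k = x 0) ∧
    (1 - A).mulVec (x 0) = B.mulVec us ∧
    ys = C.mulVec (x 0) + D.mulVec us := by
  have hinc : ∀ k ≤ n, x (k + 1) - x k = (A ^ k).mulVec (x 1 - x 0) := by
    intro k
    induction k with
    | zero => intro _; simp
    | succ k ih =>
      intro hk
      rw [pow_succ', ← Matrix.mulVec_mulVec, ← ih (by omega), Matrix.mulVec_sub,
        hdyn (k + 1) hk]
      nth_rewrite 2 [hdyn k (by omega)]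
      abel
  have hw : x 1 - x 0 = 0 := by
    refine hobs.eq_zero fun k hk => ?_
    rw [← hinc k hk.le, Matrix.mulVec_sub, sub_eq_zero]
    exact add_right_cancel ((hout (k + 1) hk).trans (hout k hk.le).symm)
  refine ⟨fun k => ?_, ?_, (hout 0 (Nat.zero_le n)).symm⟩
  · induction k with
    | zero => intro _; rfl
    | succ k ih =>
      intro hk
      have h := hinc k (by omega)
      rw [hw, Matrix.mulVec_zero, sub_eq_zero] at h
      exact h.trans (ih (by omega))
  · have h := hdyn 0 (Nat.zero_le n)
    rw [zero_add, sub_eq_zero.mp hw] at h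
    rw [Matrix.sub_mulVec, Matrix.one_mulVec]
    exact sub_eq_iff_eq_add'.mpr h
end

section
/- Suppose (A,C) is observable. Then there exists a constant c_{x,2} > 0, depending only on (A,B,C,D), such that for every triple (x^s, u^s, y^s) satisfying the equilibrium equations (I − A) x^s = B u^s and y^s = C x^s + D u^s, it holds that ‖x^s‖₂² ≤ c_{x,2} (‖u^s‖₂² + ‖y^s‖₂²). -/
lemma sqnorm_nonneg {d : ℕ} (v : Fin d → ℝ) : 0 ≤ sqnorm v :=
  Finset.sum_nonneg fun i _ => sq_nonneg (v i)

/-- Cauchy-Schwarz: a matrix expands the Euclidean norm at most by its Frobenius norm. -/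
lemma sqnorm_mulVec_le {d e : ℕ} (M : Matrix (Fin d) (Fin e) ℝ) (v : Fin e → ℝ) :
    sqnorm (M.mulVec v) ≤ (∑ i, ∑ j, (M i j) ^ 2) * sqnorm v := by
  unfold sqnorm
  rw [Finset.sum_mul]
  exact Finset.sum_le_sum fun i _ => Finset.sum_mul_sq_le_sq_mul_sq Finset.univ (M i) v

lemma sqnorm_add_le {d : ℕ} (v w : Fin d → ℝ) :
    sqnorm (v + w) ≤ 2 * (sqnorm v + sqnorm w) := by
  unfold sqnorm
  rw [← Finset.sum_add_distrib, Finset.mul_sum]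
  refine Finset.sum_le_sum fun i _ => ?_
  rw [Pi.add_apply]
  nlinarith [sq_nonneg (v i - w i)]

/-- A fixed point of `A` in the kernel of `C` is unobservable, hence zero. -/
lemma equilibrium_map_injective {n p : ℕ} (A : Matrix (Fin n) (Fin n) ℝ)
    (C : Matrix (Fin p) (Fin n) ℝ) (hobs : Observable A C) :
    LinearMap.ker ((1 - A).mulVecLin.prod C.mulVecLin) = ⊥ := by
  rw [LinearMap.ker_eq_bot']
  intro x hx
  obtain ⟨h1, h2⟩ := Prod.mk.inj hx
  simp only [Matrix.mulVecLin_apply, Matrix.sub_mulVec, Matrix.one_mulVec] at h1 h2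
  have hA : A.mulVec x = x := (sub_eq_zero.mp h1).symm
  have hpow : ∀ k : ℕ, (A ^ k).mulVec x = x := by
    intro k
    induction k with
    | zero => simp
    | succ k ih => rw [pow_succ, ← Matrix.mulVec_mulVec, hA, ih]
  unfold Observable at hobs
  set O : Matrix (Fin n × Fin p) (Fin n) ℝ :=
    Matrix.of fun (ki : Fin n × Fin p) (j : Fin n) => (C * A ^ (ki.1 : ℕ)) ki.2 j with hO
  have hOx : O.mulVec x = 0 := by
    funext ki
    have h : (C * A ^ (ki.1 : ℕ)).mulVec x = 0 := by
      rw [← Matrix.mulVec_mulVec, hpow, h2]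
    exact congrFun h ki.2
  have hker : LinearMap.ker O.mulVecLin = ⊥ := by
    have hrn := O.mulVecLin.finrank_range_add_finrank_ker
    rw [Module.finrank_fin_fun] at hrn
    have hr : Module.finrank ℝ (LinearMap.range O.mulVecLin) = n := hobs
    exact Submodule.finrank_eq_zero.mp (by omega)
  exact (LinearMap.ker_eq_bot'.mp hker) x hOx

/-- If `(A,C)` is observable, then any equilibrium triple `(x^s, u^s, y^s)` satisfies
a bound `‖x^s‖² ≤ c (‖u^s‖² + ‖y^s‖²)` with `c` depending only on the system matrices. -/
theorem statement5 {n m p : ℕ} (hn : 1 ≤ n) (hm : 1 ≤ m) (hp : 1 ≤ p)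
    (A : Matrix (Fin n) (Fin n) ℝ) (B : Matrix (Fin n) (Fin m) ℝ)
    (C : Matrix (Fin p) (Fin n) ℝ) (D : Matrix (Fin p) (Fin m) ℝ)
    (hobs : Observable A C) :
    ∃ c : ℝ, 0 < c ∧
      ∀ (xs : Fin n → ℝ) (us : Fin m → ℝ) (ys : Fin p → ℝ),
        (1 - A).mulVec xs = B.mulVec us →
        ys = C.mulVec xs + D.mulVec us →
        sqnorm xs ≤ c * (sqnorm us + sqnorm ys) := by
  obtain ⟨g, hg⟩ := LinearMap.exists_leftInverse_of_injective _
    (equilibrium_map_injective A C hobs)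
  -- `P` and `Q` represent the coefficients of `u` and `y` in `g (B u, y - D u)`.
  set P : Matrix (Fin n) (Fin m) ℝ :=
    LinearMap.toMatrix' (g ∘ₗ (B.mulVecLin.prod (-D.mulVecLin))) with hP
  set Q : Matrix (Fin n) (Fin p) ℝ :=
    LinearMap.toMatrix' (g ∘ₗ LinearMap.inr ℝ (Fin n → ℝ) (Fin p → ℝ)) with hQ
  have ha : 0 ≤ ∑ i, ∑ j, (P i j) ^ 2 := by positivity
  have hb : 0 ≤ ∑ i, ∑ j, (Q i j) ^ 2 := by positivity
  refine ⟨2 * ((∑ i, ∑ j, (P i j) ^ 2) + (∑ i, ∑ j, (Q i j) ^ 2)) + 1, by positivity, ?_⟩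
  intro xs us ys h1 h2
  have hx : xs = P.mulVec us + Q.mulVec ys := by
    have h := LinearMap.congr_fun hg xs
    simp only [LinearMap.comp_apply, LinearMap.prod_apply, LinearMap.id_apply] at h
    rw [hP, hQ, LinearMap.toMatrix'_mulVec, LinearMap.toMatrix'_mulVec, LinearMap.comp_apply,
      LinearMap.comp_apply, ← map_add]
    refine h.symm.trans (congrArg g (Prod.ext ?_ ?_))
    · simpa [Function.prod, Matrix.sub_mulVec] using h1
    · simp [Function.prod, h2]
  have h3 := sqnorm_add_le (P.mulVec us) (Q.mulVec ys)
  rw [← hx] at h3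
  have h4 := sqnorm_mulVec_le P us
  have h5 := sqnorm_mulVec_le Q ys
  have hu := sqnorm_nonneg us
  have hy := sqnorm_nonneg ys
  nlinarith [mul_nonneg ha hy, mul_nonneg hb hu]
end

section
/- Suppose (A,C) is observable. Then there exists a constant c > 0, depending only on (A,B,C,D), such that for every trajectory {(u_k, y_k)}_{k=0}^{n-1} of (A,B,C,D) with associated state sequence {x_k}_{k=0}^{n}, and every triple (x^s, u^s, y^s) satisfying (I − A) x^s = B u^s and y^s = C x^s + D u^s, one has ‖x_0 − x^s‖₂² ≤ c Σ_{i=0}^{n-1} (‖u_i − u^s‖₂² + ‖y_i − y^s‖₂²). -/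
lemma sqnorm_sub_le {d : ℕ} (v w : Fin d → ℝ) :
    sqnorm (v - w) ≤ 2 * (sqnorm v + sqnorm w) := by
  unfold sqnorm
  rw [← Finset.sum_add_distrib, Finset.mul_sum]
  refine Finset.sum_le_sum fun i _ => ?_
  simp only [Pi.sub_apply]
  nlinarith [sq_nonneg (v i + w i)]

/-- The squared Frobenius norm bounds the squared operator norm. -/
lemma sum_sq_mulVec_le {d : ℕ} {ι : Type*} [Fintype ι] (M : Matrix (Fin d) ι ℝ) (v : ι → ℝ) :
    sqnorm (M.mulVec v) ≤ (∑ i, ∑ j, M i j ^ 2) * ∑ j, v j ^ 2 := by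
  unfold sqnorm
  rw [Finset.sum_mul]
  exact Finset.sum_le_sum fun i _ => Finset.sum_mul_sq_le_sq_mul_sq _ _ _

lemma exists_sqnorm_mulVec_le {d e : ℕ} (M : Matrix (Fin d) (Fin e) ℝ) :
    ∃ K : ℝ, 0 ≤ K ∧ ∀ v, sqnorm (M.mulVec v) ≤ K * sqnorm v :=
  ⟨∑ i, ∑ j, M i j ^ 2, by positivity, fun v => sum_sq_mulVec_le M v⟩

lemma exists_leftInverse_of_rank_eq {d : ℕ} {ι : Type*} [Fintype ι]
    (O : Matrix ι (Fin d) ℝ) (hO : O.rank = d) :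
    ∃ P : Matrix (Fin d) ι ℝ, ∀ v, P.mulVec (O.mulVec v) = v := by
  classical
  have hker : LinearMap.ker O.mulVecLin = ⊥ := by
    have h := LinearMap.finrank_range_add_finrank_ker O.mulVecLin
    rw [Module.finrank_fin_fun] at h
    have h' : Module.finrank ℝ (LinearMap.range O.mulVecLin) = d := hO
    exact Submodule.finrank_eq_zero.mp (by omega)
  obtain ⟨g, hg⟩ := LinearMap.exists_leftInverse_of_injective O.mulVecLin hker
  refine ⟨LinearMap.toMatrix' g, fun v => ?_⟩
  rw [LinearMap.toMatrix'_mulVec]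
  exact LinearMap.congr_fun hg v

/-- The state differs from the free response `A ^ k e 0` by a term controlled by the
inputs applied so far. -/
lemma sqnorm_drift_le {n m : ℕ} (A : Matrix (Fin n) (Fin n) ℝ) (B : Matrix (Fin n) (Fin m) ℝ)
    (k : ℕ) :
    ∃ K : ℝ, 0 ≤ K ∧ ∀ (e : ℕ → Fin n → ℝ) (v : ℕ → Fin m → ℝ),
      (∀ j < k, e (j + 1) = A.mulVec (e j) + B.mulVec (v j)) →
      sqnorm (e k - (A ^ k).mulVec (e 0)) ≤ K * ∑ j ∈ Finset.range k, sqnorm (v j) := by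
  induction k with
  | zero => exact ⟨0, le_rfl, fun e v _ => by simp [sqnorm]⟩
  | succ k ih =>
    obtain ⟨K, hK, h⟩ := ih
    obtain ⟨a, ha, hA⟩ := exists_sqnorm_mulVec_le A
    obtain ⟨b, hb, hB⟩ := exists_sqnorm_mulVec_le B
    refine ⟨2 * (a * K + b), by positivity, fun e v he => ?_⟩
    have h1 := h e v fun j hj => he j (by omega)
    have hrw : e (k + 1) - (A ^ (k + 1)).mulVec (e 0) =
        A.mulVec (e k - (A ^ k).mulVec (e 0)) + B.mulVec (v k) := by
      rw [he k (by omega), pow_succ', Matrix.mulVec_sub, Matrix.mulVec_mulVec]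
      abel
    rw [hrw, Finset.sum_range_succ]
    have h2 := sqnorm_add_le (A.mulVec (e k - (A ^ k).mulVec (e 0))) (B.mulVec (v k))
    have h3 := (hA (e k - (A ^ k).mulVec (e 0))).trans (mul_le_mul_of_nonneg_left h1 ha)
    have h4 := hB (v k)
    have hS : 0 ≤ ∑ j ∈ Finset.range k, sqnorm (v j) :=
      Finset.sum_nonneg fun j _ => sqnorm_nonneg _
    have hv := sqnorm_nonneg (v k)
    have h5 : 0 ≤ a * K * sqnorm (v k) := by positivity
    have h6 : 0 ≤ b * ∑ j ∈ Finset.range k, sqnorm (v j) := by positivity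
    linarith

/-- The block `C A ^ k e 0` is the output `w k` minus the contribution of the inputs. -/
lemma sqnorm_output_block_le {n m p : ℕ} (A : Matrix (Fin n) (Fin n) ℝ)
    (B : Matrix (Fin n) (Fin m) ℝ) (C : Matrix (Fin p) (Fin n) ℝ) (D : Matrix (Fin p) (Fin m) ℝ)
    (N k : ℕ) (hk : k < N) :
    ∃ K : ℝ, 0 ≤ K ∧ ∀ (e : ℕ → Fin n → ℝ) (v : ℕ → Fin m → ℝ) (w : ℕ → Fin p → ℝ),
      (∀ j < N, e (j + 1) = A.mulVec (e j) + B.mulVec (v j) ∧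
        w j = C.mulVec (e j) + D.mulVec (v j)) →
      sqnorm ((C * A ^ k).mulVec (e 0)) ≤
        K * ∑ j ∈ Finset.range N, (sqnorm (v j) + sqnorm (w j)) := by
  obtain ⟨K, hK, h⟩ := sqnorm_drift_le A B k
  obtain ⟨c, hc, hC⟩ := exists_sqnorm_mulVec_le C
  obtain ⟨d, hd, hD⟩ := exists_sqnorm_mulVec_le D
  refine ⟨2 * (2 * (1 + d) + c * K), by positivity, fun e v w hT => ?_⟩
  set S := ∑ j ∈ Finset.range N, (sqnorm (v j) + sqnorm (w j)) with hS
  have hnn : ∀ j, 0 ≤ sqnorm (v j) + sqnorm (w j) := fun j =>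
    add_nonneg (sqnorm_nonneg _) (sqnorm_nonneg _)
  have hkS : sqnorm (v k) + sqnorm (w k) ≤ S :=
    Finset.single_le_sum (f := fun j => sqnorm (v j) + sqnorm (w j)) (fun j _ => hnn j)
      (Finset.mem_range.mpr hk)
  have hvS : ∑ j ∈ Finset.range k, sqnorm (v j) ≤ S :=
    (Finset.sum_le_sum fun j _ => le_add_of_nonneg_right (sqnorm_nonneg (w j))).trans
      (Finset.sum_le_sum_of_subset_of_nonneg (Finset.range_mono hk.le) fun j _ _ => hnn j)
  have hrw : (C * A ^ k).mulVec (e 0) =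
      (w k - D.mulVec (v k)) - C.mulVec (e k - (A ^ k).mulVec (e 0)) := by
    rw [(hT k hk).2, Matrix.mulVec_sub, Matrix.mulVec_mulVec]
    abel
  have hv := sqnorm_nonneg (v k)
  have hw := sqnorm_nonneg (w k)
  have h1 := sqnorm_sub_le (w k - D.mulVec (v k)) (C.mulVec (e k - (A ^ k).mulVec (e 0)))
  have h2 := sqnorm_sub_le (w k) (D.mulVec (v k))
  have h3 := (hD (v k)).trans (mul_le_mul_of_nonneg_left (show sqnorm (v k) ≤ S by linarith) hd)
  have h4 := (hC (e k - (A ^ k).mulVec (e 0))).trans (mul_le_mul_of_nonneg_left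
    ((h e v fun j hj => (hT j (hj.trans hk)).1).trans (mul_le_mul_of_nonneg_left hvS hK)) hc)
  rw [hrw]
  linarith

/-- By observability, the initial state deviation from an equilibrium is bounded by the
input and output deviations over `n` steps. -/
theorem statement10 {n m p : ℕ} (hn : 1 ≤ n) (hm : 1 ≤ m) (hp : 1 ≤ p)
    (A : Matrix (Fin n) (Fin n) ℝ) (B : Matrix (Fin n) (Fin m) ℝ)
    (C : Matrix (Fin p) (Fin n) ℝ) (D : Matrix (Fin p) (Fin m) ℝ)
    (hobs : Observable A C) :
    ∃ c : ℝ, 0 < c ∧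
      ∀ (x : ℕ → Fin n → ℝ) (u : ℕ → Fin m → ℝ) (y : ℕ → Fin p → ℝ),
        (∀ k < n, x (k + 1) = A.mulVec (x k) + B.mulVec (u k) ∧
                  y k = C.mulVec (x k) + D.mulVec (u k)) →
        ∀ (xs : Fin n → ℝ) (us : Fin m → ℝ) (ys : Fin p → ℝ),
          (1 - A).mulVec xs = B.mulVec us →
          ys = C.mulVec xs + D.mulVec us →
          sqnorm (x 0 - xs) ≤
            c * ∑ i ∈ Finset.range n, (sqnorm (u i - us) + sqnorm (y i - ys)) := by
  obtain ⟨P, hP⟩ := exists_leftInverse_of_rank_eq _ hobs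
  choose K hK hblock using fun k : Fin n => sqnorm_output_block_le A B C D n k k.2
  set F := ∑ i, ∑ j, P i j ^ 2 with hF
  have hF0 : 0 ≤ F := by positivity
  have hK0 : 0 ≤ ∑ k, K k := Finset.sum_nonneg fun k _ => hK k
  -- Adding `1` makes the constant strictly positive.
  refine ⟨F * ∑ k, K k + 1, by positivity, fun x u y hT xs us ys hxs hys => ?_⟩
  have hxs' : xs = A.mulVec xs + B.mulVec us := by
    rw [← hxs, Matrix.sub_mulVec, Matrix.one_mulVec]
    abel
  have hdev : ∀ j < n,
      x (j + 1) - xs = A.mulVec (x j - xs) + B.mulVec (u j - us) ∧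
        y j - ys = C.mulVec (x j - xs) + D.mulVec (u j - us) := by
    intro j hj
    simp only [Matrix.mulVec_sub]
    constructor
    · rw [(hT j hj).1]
      nth_rewrite 1 [hxs']
      abel
    · rw [(hT j hj).2, hys]
      abel
  set S := ∑ i ∈ Finset.range n, (sqnorm (u i - us) + sqnorm (y i - ys)) with hS
  have hS0 : 0 ≤ S :=
    Finset.sum_nonneg fun j _ => add_nonneg (sqnorm_nonneg _) (sqnorm_nonneg _)
  have h1 := sum_sq_mulVec_le P (Matrix.mulVec (Matrix.of fun (ki : Fin n × Fin p) (j : Fin n) =>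
    (C * A ^ (ki.1 : ℕ)) ki.2 j) (x 0 - xs))
  rw [hP, Fintype.sum_prod_type] at h1
  have h2 : ∑ k : Fin n, sqnorm ((C * A ^ (k : ℕ)).mulVec (x 0 - xs)) ≤ (∑ k, K k) * S := by
    rw [Finset.sum_mul]
    exact Finset.sum_le_sum fun k _ =>
      hblock k (fun j => x j - xs) (fun j => u j - us) (fun j => y j - ys) hdev
  have h3 := h1.trans (mul_le_mul_of_nonneg_left h2 hF0)
  linarith
end
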